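/- Let σ > 0, r, q ∈ ℝ, K > 0, t > 0. The Delta of the Black–Scholes call, i.e. the partial derivative with respect to s of C(s,t) = s·e^{-q t}·N(d₁(s,K,t)) − K·e^{-r t}·N(d₂(s,K,t)), equals e^{-q t}·N(d₁(s,K,t)) for every s > 0. -/

import Mathlib

open Real Set

/-- The standard normal cumulative distribution function. -/
noncomputable def stdNormalCDF (x : ℝ) : ℝ :=
  ∫ y in Set.Iic x, (Real.sqrt (2 * Real.pi))⁻¹ * Real.exp (-(y ^ 2) / 2)

/-- d₁(s,K,t) in the Black–Scholes formula. -/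
noncomputable def d1 (σ r q s K t : ℝ) : ℝ :=
  (Real.log (s / K) + (r - q + σ ^ 2 / 2) * t) / (σ * Real.sqrt t)

/-- d₂(s,K,t) in the Black–Scholes formula. -/
noncomputable def d2 (σ r q s K t : ℝ) : ℝ :=
  d1 σ r q s K t - σ * Real.sqrt t

/-- The Black–Scholes European call price. -/
noncomputable def callPrice (σ r q K s t : ℝ) : ℝ :=
  s * Real.exp (-q * t) * stdNormalCDF (d1 σ r q s K t)
    - K * Real.exp (-r * t) * stdNormalCDF (d2 σ r q s K t)

/-- The Black–Scholes European put price. -/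
noncomputable def putPrice (σ r q K s t : ℝ) : ℝ :=
  K * Real.exp (-r * t) * stdNormalCDF (-(d2 σ r q s K t))
    - s * Real.exp (-q * t) * stdNormalCDF (-(d1 σ r q s K t))

/-- The standard normal probability density function. -/
noncomputable def stdNormalPDF (x : ℝ) : ℝ :=
  (Real.sqrt (2 * Real.pi))⁻¹ * Real.exp (-(x ^ 2) / 2)

/-!
Both `d₁` and `d₂ = d₁ - σ√t` have derivative `1 / (s σ √t)` in `s`, so by the product rule the
derivative of the call price is `e^{-qt} N(d₁)` plus
`(s e^{-qt} φ(d₁) - K e^{-rt} φ(d₂)) / (s σ √t)`, where `φ = N'` is the normal density. The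
correction vanishes: `φ(x - y) / φ(x) = exp (x y - y² / 2)`, and at `x = d₁`, `y = σ√t` the exponent
is `log (s / K) + (r - q) t`.
-/

open MeasureTheory ProbabilityTheory

theorem hasDerivAt_setIntegral_Iic {E : Type*} [NormedAddCommGroup E] [NormedSpace ℝ E]
    [CompleteSpace E] {f : ℝ → E} {a b : ℝ} (hf : IntegrableOn f (Iic b)) (hab : a < b)
    (ha : ContinuousAt f a) : HasDerivAt (fun x => ∫ y in Iic x, f y) (f a) a := by
  have hmeas : StronglyMeasurableAtFilter f (nhds a) :=
    ⟨Iic b, Iic_mem_nhds hab, hf.aestronglyMeasurable⟩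
  have hint : HasDerivAt (fun x => (∫ y in Iic a, f y) + ∫ y in a..x, f y) (f a) a :=
    (intervalIntegral.integral_hasDerivAt_right .refl hmeas ha).const_add _
  refine hint.congr_of_eventuallyEq ?_
  filter_upwards [Iic_mem_nhds hab] with x hxb
  rw [← intervalIntegral.integral_Iic_sub_Iic (hf.mono_set (Iic_subset_Iic.2 hab.le))
    (hf.mono_set (Iic_subset_Iic.2 hxb)), add_sub_cancel]

theorem stdNormalPDF_eq_gaussianPDFReal : stdNormalPDF = gaussianPDFReal 0 1 := by
  funext x
  simp [stdNormalPDF, gaussianPDFReal]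

theorem continuous_stdNormalPDF : Continuous stdNormalPDF := by
  unfold stdNormalPDF
  fun_prop

theorem integrable_stdNormalPDF : Integrable stdNormalPDF :=
  stdNormalPDF_eq_gaussianPDFReal ▸ integrable_gaussianPDFReal 0 1

theorem hasDerivAt_stdNormalCDF (x : ℝ) : HasDerivAt stdNormalCDF (stdNormalPDF x) x :=
  hasDerivAt_setIntegral_Iic integrable_stdNormalPDF.integrableOn (lt_add_one x)
    continuous_stdNormalPDF.continuousAt

theorem stdNormalPDF_sub (x y : ℝ) :
    stdNormalPDF (x - y) = stdNormalPDF x * Real.exp (x * y - y ^ 2 / 2) := by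
  rw [stdNormalPDF, stdNormalPDF, mul_assoc, ← Real.exp_add]
  ring_nf

section BlackScholes

variable {σ K s t : ℝ} (r q : ℝ)

theorem hasDerivAt_d1 (σ t : ℝ) (hK : K ≠ 0) (hs : s ≠ 0) :
    HasDerivAt (fun x => d1 σ r q x K t) (s * (σ * √t))⁻¹ s := by
  have hlog : HasDerivAt (fun x => Real.log (x / K)) s⁻¹ s := by
    convert! ((hasDerivAt_id s).div_const K).log (div_ne_zero hs hK) using 1
    simp only [id]
    field_simp
  convert! (hlog.add_const ((r - q + σ ^ 2 / 2) * t)).div_const (σ * √t) using 1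
  rw [mul_inv, div_eq_mul_inv]

theorem hasDerivAt_d2 (σ t : ℝ) (hK : K ≠ 0) (hs : s ≠ 0) :
    HasDerivAt (fun x => d2 σ r q x K t) (s * (σ * √t))⁻¹ s :=
  (hasDerivAt_d1 r q σ t hK hs).sub_const _

theorem d1_mul_sub_sq_half (s K : ℝ) (hσ : σ ≠ 0) (ht : 0 < t) :
    d1 σ r q s K t * (σ * √t) - (σ * √t) ^ 2 / 2 = Real.log (s / K) + (r - q) * t := by
  have hσt : σ * √t ≠ 0 := mul_ne_zero hσ (Real.sqrt_pos.2 ht).ne'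
  rw [d1, div_mul_cancel₀ _ hσt, mul_pow, Real.sq_sqrt ht.le]
  ring

theorem strike_mul_stdNormalPDF_d2 (hσ : σ ≠ 0) (hK : 0 < K) (ht : 0 < t) (hs : 0 < s) :
    K * Real.exp (-r * t) * stdNormalPDF (d2 σ r q s K t)
      = s * Real.exp (-q * t) * stdNormalPDF (d1 σ r q s K t) := by
  have hdiscount : Real.exp (-r * t) * Real.exp ((r - q) * t) = Real.exp (-q * t) := by
    rw [← Real.exp_add]
    ring_nf
  rw [d2, stdNormalPDF_sub, d1_mul_sub_sq_half r q s K hσ ht, Real.exp_add,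
    Real.exp_log (div_pos hs hK), ← hdiscount]
  field_simp

/-- Since `callPrice (-σ) = -putPrice σ`, negative `σ` gives the Delta of the put. -/
theorem blackScholes_call_delta_general (hσ : σ ≠ 0) (hK : 0 < K) (ht : 0 < t) (hs : 0 < s) :
    HasDerivAt (fun x => callPrice σ r q K x t)
      (Real.exp (-q * t) * stdNormalCDF (d1 σ r q s K t)) s := by
  have hN₁ := (hasDerivAt_stdNormalCDF _).comp s (hasDerivAt_d1 r q σ t hK.ne' hs.ne')
  have hN₂ := (hasDerivAt_stdNormalCDF _).comp s (hasDerivAt_d2 r q σ t hK.ne' hs.ne')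
  have hasset := ((hasDerivAt_id s).mul_const (Real.exp (-q * t))).mul hN₁
  have hstrike := hN₂.const_mul (K * Real.exp (-r * t))
  convert! hasset.sub hstrike using 1
  simp only [Function.comp_apply, id]
  linear_combination (s * (σ * √t))⁻¹ * strike_mul_stdNormalPDF_d2 r q hσ hK ht hs

end BlackScholes

/-- The Delta of the Black–Scholes call equals e^{-qt}·N(d₁). -/
theorem blackScholes_call_delta
    (σ r q K t : ℝ) (hσ : 0 < σ) (hK : 0 < K) (ht : 0 < t) :
    ∀ s : ℝ, 0 < s →
      deriv (fun x => callPrice σ r q K x t) s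
        = Real.exp (-q * t) * stdNormalCDF (d1 σ r q s K t) :=
  fun _ hs => (blackScholes_call_delta_general r q hσ.ne' hK ht hs).deriv
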